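/- There exists an absolute constant C such that for every nondegenerate triangle T ⊂ ℝ² with diameter h_T and area |T|, every edge e of T with length |e|, and every v ∈ C¹(T̄): ‖v − v̄ₑ‖_{L²(e)} ≤ C (|e|/|T|)^{1/2} h_T ‖∇v‖_{L²(T)}, where v̄ₑ = |e|^{−1} ∫_e v ds is the mean value of v on e. -/

import Mathlib

/-!
Write `K` for the closed triangle `A B C`, `h` for its diameter and
`P (y, s) = A + s (1 - y) (B - A) + y (C - A)` for `y ∈ [0, 1/2]`, `s ∈ [0, 1]`. This map carries
the rectangle onto the trapezoid of `K` adjacent to the edge `[A, B]`, its restriction to `y = 0`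
parametrizes the edge, and both of its partial derivatives are bounded by `h`. For every `y`, the
mean minimizes the `L²` distance to constants, so `v` on the edge may be compared with the constant
`v (P (y, 0))` instead. One goes from `P (0, s)` up to `P (y, s)` and then across to `P (y, 0)`;
the fundamental theorem of calculus, Cauchy-Schwarz and an average over `y` bound the variance of
`v` on the edge by `5 h²` times the integral of `|∇v ∘ P|²` over the rectangle
(`rectangle_trace_poincare`).

The factor `1 - y ≥ 1/2` loses at most a constant `2` when returning to affine coordinates
(`integral_trapezoid_le`). In these coordinates Lebesgue measure is transported to a multiple `c`
of Lebesgue measure by uniqueness of Haar measure, and `c |K| ≤ 1` because the reference triangle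
lies in the unit square (`setIntegral_refMap_mul_volume_le`). Altogether
`‖v - v̄ₑ‖² ≤ 10 |e| h² |T|⁻¹ ‖∇v‖²`, and the constant `4` works since `10 ≤ 4²`.

All derivatives are taken within `K`, where they are continuous up to the boundary; the frontier
of `K` is a null set, so this does not affect the integral over the open triangle.
-/

open MeasureTheory Set Metric

noncomputable section

abbrev E2 : Type := EuclideanSpace ℝ (Fin 2)

/-- The (open) triangle with vertices A, B, C. -/
def Tri (A B C : E2) : Set E2 := interior (convexHull ℝ {A, B, C})

/-- L² norm of the gradient of `v` over a set `D`. -/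
def gradL2 (v : E2 → ℝ) (D : Set E2) : ℝ :=
  Real.sqrt (∫ z in D, ‖fderiv ℝ v z‖ ^ 2)

/-- L² norm of `v` over the edge (segment) from A to B, with respect to
one-dimensional Hausdorff (arclength) measure. -/
def L2edge (v : E2 → ℝ) (A B : E2) : ℝ :=
  Real.sqrt (∫ z in segment ℝ A B, (v z) ^ 2 ∂(Measure.hausdorffMeasure 1))

/-- The mean value of `v` over the edge from A to B, w.r.t. arclength measure. -/
def edgeMean (v : E2 → ℝ) (A B : E2) : ℝ :=
  (dist A B)⁻¹ * ∫ z in segment ℝ A B, v z ∂(Measure.hausdorffMeasure 1)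

/-! ### One-dimensional and rectangle estimates -/

/-- The mean value minimizes the `L²([0, 1])` distance to constants. -/
theorem integral_sq_sub_mean_le {g : ℝ → ℝ} (hg : ContinuousOn g (Icc 0 1)) (c : ℝ) :
    ∫ s in (0:ℝ)..1, (g s - ∫ t in (0:ℝ)..1, g t) ^ 2 ≤ ∫ s in (0:ℝ)..1, (g s - c) ^ 2 := by
  rw [← uIcc_of_le zero_le_one] at hg
  have h1 : IntervalIntegrable g volume 0 1 := hg.intervalIntegrable
  have h2 : IntervalIntegrable (fun s => g s ^ 2) volume 0 1 := (hg.pow 2).intervalIntegrable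
  have key : ∀ d : ℝ, ∫ s in (0:ℝ)..1, (g s - d) ^ 2 =
      (∫ s in (0:ℝ)..1, g s ^ 2) - 2 * d * (∫ s in (0:ℝ)..1, g s) + d ^ 2 := by
    intro d
    have : ∀ s, (g s - d) ^ 2 = g s ^ 2 - 2 * d * g s + d ^ 2 := fun s => by ring
    simp_rw [this]
    rw [intervalIntegral.integral_add (h2.sub (h1.const_mul _)) (by simp),
      intervalIntegral.integral_sub h2 (h1.const_mul _), intervalIntegral.integral_const_mul]
    simp
  rw [key, key]
  nlinarith [sq_nonneg ((∫ s in (0:ℝ)..1, g s) - c)]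

/-- Cauchy-Schwarz against the constant `1`; the difference of the two sides is `a` times the
integral of the squared deviation of `f` from its mean. -/
theorem sq_integral_le {a : ℝ} (ha : 0 < a) {f : ℝ → ℝ} (hf : Continuous f) :
    (∫ t in (0:ℝ)..a, f t) ^ 2 ≤ a * ∫ t in (0:ℝ)..a, f t ^ 2 := by
  set m := ∫ t in (0:ℝ)..a, f t with hm
  have h0 : 0 ≤ ∫ t in (0:ℝ)..a, (f t - m / a) ^ 2 :=
    intervalIntegral.integral_nonneg ha.le fun t _ => sq_nonneg _
  have : ∀ s, (f s - m / a) ^ 2 = f s ^ 2 - 2 * (m / a) * f s + (m / a) ^ 2 := fun s => by ring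
  simp_rw [this] at h0
  rw [intervalIntegral.integral_add (Continuous.intervalIntegrable (by fun_prop) _ _) (by simp),
      intervalIntegral.integral_sub (Continuous.intervalIntegrable (by fun_prop) _ _)
        (Continuous.intervalIntegrable (by fun_prop) _ _),
      intervalIntegral.integral_const_mul, ← hm] at h0
  simp only [intervalIntegral.integral_const, smul_eq_mul, sub_zero] at h0
  have e : a * (a * (m / a) ^ 2 - 2 * (m / a) * m) = - m ^ 2 := by field_simp; ring
  nlinarith [mul_nonneg ha.le h0]

/-- Trace-Poincaré inequality on the rectangle `[0, 1/2] × [0, 1]`. The function `G` bounds both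
partial derivatives of `U` up to the factor `h`, in the integrated form `hver`, `hhor`. -/
theorem rectangle_trace_poincare {U G : ℝ → ℝ → ℝ} {h : ℝ} (hh : 0 ≤ h)
    (hG : Continuous (Function.uncurry G)) (hG0 : ∀ y s, 0 ≤ G y s)
    (hU : ContinuousOn (U 0) (Icc 0 1))
    (hver : ∀ y ∈ Icc (0:ℝ) (1/2), ∀ s ∈ Icc (0:ℝ) 1,
      |U y s - U 0 s| ≤ h * ∫ η in (0:ℝ)..y, G η s)
    (hhor : ∀ y ∈ Icc (0:ℝ) (1/2), ∀ s ∈ Icc (0:ℝ) 1,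
      |U y s - U y 0| ≤ h * ∫ σ in (0:ℝ)..s, G y σ) :
    ∫ s in (0:ℝ)..1, (U 0 s - ∫ t in (0:ℝ)..1, U 0 t) ^ 2 ≤
      5 * h ^ 2 * ∫ y in (0:ℝ)..(1/2), ∫ s in (0:ℝ)..1, G y s ^ 2 := by
  set V := ∫ s in (0:ℝ)..1, (U 0 s - ∫ t in (0:ℝ)..1, U 0 t) ^ 2 with hV
  set I := ∫ y in (0:ℝ)..(1/2), ∫ s in (0:ℝ)..1, G y s ^ 2 with hI
  have hGc2 : Continuous (Function.uncurry fun y s => G y s ^ 2) := hG.pow 2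
  have hGc2' : Continuous (Function.uncurry fun s y => G y s ^ 2) := hGc2.comp continuous_swap
  have cy : ∀ s, Continuous fun y => G y s :=
    fun s => hG.comp (by fun_prop : Continuous fun y => (y, s))
  have cs : ∀ y, Continuous (G y) := fun y => hG.comp (by fun_prop : Continuous fun s => (y, s))
  have hswap : ∫ s in (0:ℝ)..1, ∫ y in (0:ℝ)..(1/2), G y s ^ 2 = I := by
    rw [hI]
    refine intervalIntegral_intervalIntegral_swap (F := fun s y => G y s ^ 2) ?_
    exact (hGc2'.continuousOn.integrableOn_compact
      ((isCompact_uIcc (a := (0:ℝ)) (b := 1)).prod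
        (isCompact_uIcc (a := (0:ℝ)) (b := 1/2)))).mono_set
      (prod_mono uIoc_subset_uIcc uIoc_subset_uIcc)
  have step : ∀ y ∈ Icc (0:ℝ) (1/2), V ≤ h ^ 2 * I + 2 * h ^ 2 * ∫ s in (0:ℝ)..1, G y s ^ 2 := by
    intro y hy
    refine (integral_sq_sub_mean_le hU (U y 0)).trans ?_
    have hpt : ∀ s ∈ Icc (0:ℝ) 1, (U 0 s - U y 0) ^ 2 ≤
        h ^ 2 * (∫ η in (0:ℝ)..(1/2), G η s ^ 2) + 2 * h ^ 2 * ∫ σ in (0:ℝ)..1, G y σ ^ 2 := by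
      intro s hs
      have a1 : |U y s - U 0 s| ≤ h * ∫ η in (0:ℝ)..(1/2), G η s :=
        (hver y hy s hs).trans (mul_le_mul_of_nonneg_left
          (intervalIntegral.integral_mono_interval le_rfl hy.1 hy.2
            (Filter.Eventually.of_forall fun η => hG0 η s) ((cy s).intervalIntegrable _ _)) hh)
      have a2 : |U y s - U y 0| ≤ h * ∫ σ in (0:ℝ)..1, G y σ :=
        (hhor y hy s hs).trans (mul_le_mul_of_nonneg_left
          (intervalIntegral.integral_mono_interval le_rfl hs.1 hs.2
            (Filter.Eventually.of_forall fun σ => hG0 y σ) ((cs y).intervalIntegrable _ _)) hh)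
      have b1 := sq_integral_le (show (0:ℝ) < 1/2 by norm_num) (cy s)
      have b2 := sq_integral_le one_pos (cs y)
      have c1 := sq_le_sq' (by linarith [abs_le.1 a1]) (abs_le.1 a1).2
      have c2 := sq_le_sq' (by linarith [abs_le.1 a2]) (abs_le.1 a2).2
      rw [mul_pow] at c1 c2
      have d1 := mul_le_mul_of_nonneg_left b1 (sq_nonneg h)
      have d2 := mul_le_mul_of_nonneg_left b2 (sq_nonneg h)
      -- `(a - b)² ≤ 2 a² + 2 b²`, where `a - b = U 0 s - U y 0`
      nlinarith [sq_nonneg ((U y s - U 0 s) + (U y s - U y 0))]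
    have hU' := hU
    rw [← uIcc_of_le zero_le_one] at hU'
    have ci : Continuous fun s => ∫ η in (0:ℝ)..(1/2), G η s ^ 2 :=
      intervalIntegral.continuous_parametric_intervalIntegral_of_continuous' hGc2' _ _
    refine (intervalIntegral.integral_mono_on zero_le_one
      (((hU'.sub continuousOn_const).pow 2).intervalIntegrable)
      (Continuous.intervalIntegrable (by fun_prop) _ _) hpt).trans_eq ?_
    rw [intervalIntegral.integral_add (Continuous.intervalIntegrable (by fun_prop) _ _)
      (by simp), intervalIntegral.integral_const_mul, hswap]
    simp
  have ci : Continuous fun y => ∫ s in (0:ℝ)..1, G y s ^ 2 :=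
      intervalIntegral.continuous_parametric_intervalIntegral_of_continuous' hGc2 _ _
  -- average the estimate `step` over `y ∈ [0, 1/2]`
  have := intervalIntegral.integral_mono_on (show (0:ℝ) ≤ 1/2 by norm_num)
    (by simp : IntervalIntegrable (fun _ => V) volume 0 (1/2))
    (Continuous.intervalIntegrable (by fun_prop) _ _) step
  rw [intervalIntegral.integral_add (by simp) (Continuous.intervalIntegrable (by fun_prop) _ _),
    intervalIntegral.integral_const_mul, intervalIntegral.integral_const_mul, ← hI] at this
  simp only [intervalIntegral.integral_const, smul_eq_mul, sub_zero] at this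
  linarith

/-! ### Integrals along segments -/

/-- Differences of `v` along a segment in `K`, bounded through the derivative within `K`, so that
the segment may lie on the boundary of `K`. -/
theorem abs_sub_le_integral_on_segment {K : Set E2} {v : E2 → ℝ} (hv : ContDiffOn ℝ 1 v K)
    {p w : E2} {b : ℝ} (hb : 0 ≤ b) (hK : ∀ t ∈ Icc 0 b, p + t • w ∈ K)
    {h : ℝ} {B : ℝ → ℝ} (hB : Continuous B) (hw : ‖w‖ ≤ h)
    (hDB : ∀ t ∈ Icc 0 b, ‖fderivWithin ℝ v K (p + t • w)‖ ≤ B t) :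
    |v (p + b • w) - v p| ≤ h * ∫ t in (0:ℝ)..b, B t := by
  have hder : ∀ t ∈ Icc 0 b, HasDerivWithinAt (fun t : ℝ => v (p + t • w))
      (fderivWithin ℝ v K (p + t • w) w) (Icc 0 b) t := by
    intro t ht
    have h1 : HasDerivWithinAt (fun t : ℝ => p + t • w) w (Icc 0 b) t := by
      simpa using (((hasDerivAt_id t).smul_const w).const_add p).hasDerivWithinAt
    exact ((hv.differentiableOn one_ne_zero _ (hK t ht)).hasFDerivWithinAt).comp_hasDerivWithinAt
      t h1 hK
  have := norm_sub_le_integral_of_norm_deriv_le_of_le (f := fun t : ℝ => v (p + t • w))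
    (B := fun t => h * B t) hb
    (fun t ht => (hder t ht).continuousWithinAt)
    (fun t ht => ((hder t (Ioo_subset_Icc_self ht)).differentiableWithinAt).mono Ioo_subset_Icc_self)
    (Filter.Eventually.of_forall fun t ht => by
      rw [((hder t (Ioo_subset_Icc_self ht)).hasDerivAt (Icc_mem_nhds ht.1 ht.2)).deriv]
      have ht' := Ioo_subset_Icc_self ht
      refine (ContinuousLinearMap.le_opNorm _ _).trans ?_
      rw [mul_comm h]
      exact mul_le_mul (hDB t ht') hw (norm_nonneg _) ((norm_nonneg _).trans (hDB t ht')))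
    (Continuous.intervalIntegrable (by fun_prop) _ _)
  simpa [intervalIntegral.integral_const_mul] using this

/-- Arclength integrals over `[A, B]` in the affine parametrization of the segment. -/
theorem setIntegral_segment (A B : E2) (f : E2 → ℝ) :
    ∫ z in segment ℝ A B, f z ∂(Measure.hausdorffMeasure 1) =
      dist A B * ∫ s in (0:ℝ)..1, f (A + s • (B - A)) := by
  have hcont : Continuous (AffineMap.lineMap A B : ℝ → E2) := AffineMap.lineMap_continuous
  -- `lineMap A B` is injective only for distinct endpoints
  by_cases hAB : A = B
  · subst hAB
    have : (Measure.hausdorffMeasure 1 : Measure E2) (segment ℝ A A) = 0 := by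
      rw [hausdorffMeasure_segment]; simp
    rw [setIntegral_measure_zero _ this]; simp
  have hinj : Function.Injective (AffineMap.lineMap A B : ℝ → E2) := AffineMap.lineMap_injective ℝ hAB
  have hm : (Measure.hausdorffMeasure 1 : Measure E2).restrict (segment ℝ A B) =
      nndist A B • (volume.restrict (Icc (0:ℝ) 1)).map (AffineMap.lineMap A B) := by
    ext s hs
    rw [Measure.restrict_apply hs, Measure.smul_apply, Measure.map_apply hcont.measurable hs,
      Measure.restrict_apply (hcont.measurable hs), segment_eq_image_lineMap, inter_comm,
      ← image_inter_preimage, hausdorffMeasure_lineMap_image, inter_comm]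
    simp
  rw [hm, integral_smul_nnreal_measure,
    (hcont.measurableEmbedding hinj).integral_map,
    intervalIntegral.integral_of_le zero_le_one, integral_Icc_eq_integral_Ioc, NNReal.smul_def,
    smul_eq_mul]
  simp only [AffineMap.lineMap_apply, vsub_eq_sub, vadd_eq_add, coe_nndist, add_comm]

/-! ### Affine coordinates on the triangle -/

/-- The affine chart of the plane with `(0, 0) ↦ A`, `(0, 1) ↦ B`, `(1, 0) ↦ C`. The height `y`
over the edge `[A, B]` is the first coordinate, so that iterated integrals run over `y` outside. -/
def refMap (A B C : E2) : ℝ × ℝ → E2 := fun z => A + (z.2 • (B - A) + z.1 • (C - A))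

theorem continuous_refMap (A B C : E2) : Continuous (refMap A B C) := by
  unfold refMap; fun_prop

theorem refMap_mem {A B C : E2} {x y : ℝ} (hx : 0 ≤ x) (hy : 0 ≤ y) (hxy : x + y ≤ 1) :
    refMap A B C (y, x) ∈ convexHull ℝ ({A, B, C} : Set E2) := by
  have hs := subset_convexHull ℝ ({A, B, C} : Set E2)
  have := (convex_convexHull ℝ ({A, B, C} : Set E2)).sum_mem (t := Finset.univ)
    (w := ![1 - x - y, x, y]) (z := ![A, B, C])
    (by intro i _; fin_cases i <;> simp <;> linarith)
    (by simp only [Fin.sum_univ_three, Matrix.cons_val]; ring)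
    (by intro i _; fin_cases i <;> apply hs <;> simp)
  convert this using 1
  simp only [refMap, Fin.sum_univ_three, Matrix.cons_val]
  module

theorem exists_linear_refMap {A B C : E2} (h : AffineIndependent ℝ ![A, B, C]) :
    ∃ L : (ℝ × ℝ) ≃L[ℝ] E2, ∀ z, refMap A B C z = A + L z := by
  let l : (ℝ × ℝ) →ₗ[ℝ] E2 := (LinearMap.snd ℝ ℝ ℝ).smulRight (B - A) +
    (LinearMap.fst ℝ ℝ ℝ).smulRight (C - A)
  have hl : Function.Injective l := by
    rw [injective_iff_map_eq_zero]
    rintro ⟨y, x⟩ hz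
    have hz' : x • (B - A) + y • (C - A) = 0 := hz
    have := (affineIndependent_iff.1 h) Finset.univ ![-(x + y), x, y]
      (by simp [Fin.sum_univ_three])
      (by simp only [Fin.sum_univ_three, Matrix.cons_val]; rw [← hz']; module)
    have h1 := this 1 (Finset.mem_univ _)
    have h2 := this 2 (Finset.mem_univ _)
    simp at h1 h2
    simp [h1, h2]
  refine ⟨(l.linearEquivOfInjective hl (by simp [E2])).toContinuousLinearEquiv, fun z => ?_⟩
  rfl

theorem refMap_preimage_subset {A B C : E2} (h : AffineIndependent ℝ ![A, B, C]) :
    refMap A B C ⁻¹' convexHull ℝ {A, B, C} ⊆ Icc (0:ℝ) 1 ×ˢ Icc (0:ℝ) 1 := by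
  obtain ⟨L, hL⟩ := exists_linear_refMap h
  have hc : Convex ℝ (refMap A B C '' (Icc (0:ℝ) 1 ×ˢ Icc (0:ℝ) 1)) := by
    have := (((convex_Icc (0:ℝ) 1).prod (convex_Icc (0:ℝ) 1)).linear_image
      (L : (ℝ × ℝ) →ₗ[ℝ] E2)).translate A
    rw [image_image] at this
    rwa [show refMap A B C = fun z => A + (L : (ℝ × ℝ) →ₗ[ℝ] E2) z from funext hL]
  have hsub : convexHull ℝ ({A, B, C} : Set E2) ⊆ refMap A B C '' (Icc (0:ℝ) 1 ×ˢ Icc (0:ℝ) 1) := by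
    refine convexHull_min ?_ hc
    rintro z (rfl | rfl | rfl)
    · exact ⟨(0, 0), by simp, by simp [refMap]⟩
    · exact ⟨(0, 1), by simp, by simp [refMap]⟩
    · exact ⟨(1, 0), by simp, by simp [refMap]⟩
  intro z hz
  obtain ⟨w, hw, hwz⟩ := hsub hz
  rw [hL, hL] at hwz
  rwa [← L.injective (add_left_cancel hwz)]

theorem isCompact_triangle (A B C : E2) : IsCompact (convexHull ℝ ({A, B, C} : Set E2)) :=
  (Set.toFinite _).isCompact_convexHull (𝕜 := ℝ)

/-- Change of variables by the affine chart. The Jacobian is bounded by the fact that the preimage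
of the triangle lies in the unit square. -/
theorem setIntegral_refMap_mul_volume_le {A B C : E2} (h : AffineIndependent ℝ ![A, B, C])
    {F : E2 → ℝ} (hF : ∀ z, 0 ≤ F z) :
    (∫ z in refMap A B C ⁻¹' convexHull ℝ {A, B, C}, F (refMap A B C z)) *
      volume.real (convexHull ℝ ({A, B, C} : Set E2)) ≤ ∫ z in convexHull ℝ {A, B, C}, F z := by
  set K := convexHull ℝ ({A, B, C} : Set E2) with hK
  have hKc : IsCompact K := isCompact_triangle A B C
  obtain ⟨L, hL⟩ := exists_linear_refMap h
  have hcm := continuous_refMap A B C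
  have hinj : Function.Injective (refMap A B C) := fun z w hzw => by
    rw [hL, hL] at hzw; exact L.injective (add_left_cancel hzw)
  obtain ⟨c, hc⟩ : ∃ c : NNReal, (volume : Measure (ℝ × ℝ)).map (refMap A B C) =
      c • (volume : Measure E2) := by
    obtain ⟨c, h1⟩ : ∃ c : NNReal, (volume : Measure (ℝ × ℝ)).map L = c • (volume : Measure E2) :=
      ⟨_, Measure.isAddLeftInvariant_eq_smul _ _⟩
    refine ⟨c, ?_⟩
    have : refMap A B C = (fun z => A + z) ∘ L := funext hL
    rw [this, ← Measure.map_map (by fun_prop) L.continuous.measurable, h1, Measure.map_smul,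
      map_add_left_eq_self]
  have hvol : c * volume.real K ≤ 1 := by
    have h2 : (volume : Measure (ℝ × ℝ)).map (refMap A B C) K ≤ 1 := by
      rw [Measure.map_apply hcm.measurable hKc.measurableSet]
      refine (measure_mono (refMap_preimage_subset h)).trans ?_
      rw [Measure.volume_eq_prod, Measure.prod_prod]; simp
    rw [hc, Measure.smul_apply] at h2
    have := ENNReal.toReal_mono ENNReal.one_ne_top h2
    simpa [Measure.real, ENNReal.smul_def] using this
  have hint : ∫ z in refMap A B C ⁻¹' K, F (refMap A B C z) = c * ∫ z in K, F z := by
    rw [← (hcm.measurableEmbedding hinj).setIntegral_map, hc, Measure.restrict_smul,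
      integral_smul_nnreal_measure, NNReal.smul_def, smul_eq_mul]
  rw [hint]
  have h0 : 0 ≤ ∫ z in K, F z := integral_nonneg hF
  nlinarith [mul_le_mul_of_nonneg_left hvol h0]

/-- Passage from the trapezoid parametrization `(y, s) ↦ (y, s (1 - y))` to a region `S` of the
affine chart containing the reference triangle. The function `Q` is a continuous extension to the
plane of the pulled-back integrand. -/
theorem integral_trapezoid_le {S : Set (ℝ × ℝ)} (hS : IsCompact S)
    (hsub : ∀ x y : ℝ, 0 ≤ x → 0 ≤ y → x + y ≤ 1 → (y, x) ∈ S)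
    {H : ℝ × ℝ → ℝ} (hH : ContinuousOn H S) (hH0 : ∀ z, 0 ≤ H z)
    {Q : ℝ → ℝ → ℝ} (hQ : Continuous (Function.uncurry Q))
    (hQH : ∀ y ∈ Icc (0:ℝ) (1/2), ∀ s ∈ Icc (0:ℝ) 1, Q y s = H (y, s * (1 - y))) :
    ∫ y in (0:ℝ)..(1/2), ∫ s in (0:ℝ)..1, Q y s ≤ 2 * ∫ z in S, H z := by
  have hi : Integrable (S.indicator H) :=
    (integrable_indicator_iff hS.measurableSet).2 (hH.integrableOn_compact hS)
  have hi0 : ∀ z, 0 ≤ S.indicator H z := indicator_nonneg fun z _ => hH0 z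
  rw [← integral_indicator hS.measurableSet, Measure.volume_eq_prod,
    integral_prod _ (by rwa [← Measure.volume_eq_prod])]
  rw [Measure.volume_eq_prod] at hi
  have hφ := hi.integral_prod_left
  refine le_trans ?_ (mul_le_mul_of_nonneg_left
    (setIntegral_le_integral (s := Ioc (0:ℝ) (1/2)) hφ
    (Filter.Eventually.of_forall fun y => integral_nonneg fun x => hi0 _)) zero_le_two)
  rw [intervalIntegral.integral_of_le (by norm_num), ← integral_const_mul]
  have ci : Continuous fun y => ∫ s in (0:ℝ)..1, Q y s :=
      intervalIntegral.continuous_parametric_intervalIntegral_of_continuous' hQ _ _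
  refine setIntegral_mono_on_ae (ci.integrableOn_Ioc) (hφ.const_mul 2).integrableOn
    measurableSet_Ioc ?_
  filter_upwards [hi.prod_right_ae] with y hy hy12
  have hy' : 0 < 1 - y := by linarith [hy12.2]
  have e1 : ∫ s in (0:ℝ)..1, Q y s = ∫ s in (0:ℝ)..1, S.indicator H (y, s * (1 - y)) := by
    refine intervalIntegral.integral_congr fun s hs => ?_
    rw [uIcc_of_le zero_le_one] at hs
    rw [hQH y (Ioc_subset_Icc_self hy12) s hs, indicator_of_mem]
    refine hsub _ _ (mul_nonneg hs.1 hy'.le) hy12.1.le ?_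
    nlinarith [hs.2]
  rw [e1, intervalIntegral.integral_comp_mul_right (fun x => S.indicator H (y, x)) hy'.ne',
    zero_mul, one_mul, intervalIntegral.integral_of_le hy'.le, smul_eq_mul]
  have e2 : ∫ x in Ioc 0 (1 - y), S.indicator H (y, x) ≤ ∫ x, S.indicator H (y, x) :=
    setIntegral_le_integral hy (Filter.Eventually.of_forall fun x => hi0 _)
  have e3 : (1 - y)⁻¹ ≤ 2 := by
    rw [inv_le_comm₀ hy' two_pos]; linarith [hy12.2]
  exact mul_le_mul e3 e2 (integral_nonneg fun x => hi0 _) zero_le_two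

theorem interior_triangle_nonempty {A B C : E2} (h : AffineIndependent ℝ ![A, B, C]) :
    (interior (convexHull ℝ ({A, B, C} : Set E2))).Nonempty := by
  rw [interior_convexHull_nonempty_iff_affineSpan_eq_top]
  have := h.affineSpan_eq_top_iff_card_eq_finrank_add_one.2 (by simp [E2])
  rw [← this]
  congr 1
  ext z; simp [eq_comm, or_comm, or_left_comm]

theorem restrict_interior_triangle (A B C : E2) :
    (volume : Measure E2).restrict (interior (convexHull ℝ {A, B, C})) =
      volume.restrict (convexHull ℝ {A, B, C}) :=
  Measure.restrict_congr_set (interior_ae_eq_of_null_frontier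
    ((convex_convexHull ℝ _).addHaar_frontier volume))

/-! ### The estimate on a triangle -/

/-- The projection `t ↦ max 0 (min t b)` of `ℝ` onto `[0, b]` (for `0 ≤ b`). It extends functions
given on a rectangle to continuous functions on the plane. -/
def clip (b t : ℝ) : ℝ := max 0 (min t b)

theorem clip_mem {b : ℝ} (hb : 0 ≤ b) (t : ℝ) : clip b t ∈ Icc 0 b :=
  ⟨le_max_left _ _, max_le hb (min_le_right _ _)⟩

theorem clip_of_mem {b t : ℝ} (ht : t ∈ Icc 0 b) : clip b t = t := by
  rw [clip, min_eq_left ht.2, max_eq_right ht.1]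

/-- The squared estimate, with the edge parametrized by `[0, 1]` and gradients taken within the
closed triangle. -/
theorem integral_edge_le {A B C : E2} (h : AffineIndependent ℝ ![A, B, C]) {v : E2 → ℝ}
    (hv : ContDiffOn ℝ 1 v (convexHull ℝ {A, B, C})) :
    (∫ s in (0:ℝ)..1, (v (A + s • (B - A)) - ∫ t in (0:ℝ)..1, v (A + t • (B - A))) ^ 2) *
      volume.real (convexHull ℝ ({A, B, C} : Set E2)) ≤
    10 * diam (convexHull ℝ ({A, B, C} : Set E2)) ^ 2 *
      ∫ z in convexHull ℝ {A, B, C}, ‖fderivWithin ℝ v (convexHull ℝ {A, B, C}) z‖ ^ 2 := by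
  set K := convexHull ℝ ({A, B, C} : Set E2) with hK
  have hKc : IsCompact K := isCompact_triangle A B C
  have hA : A ∈ K := subset_convexHull _ _ (by simp)
  have hB : B ∈ K := subset_convexHull _ _ (by simp)
  have hC : C ∈ K := subset_convexHull _ _ (by simp)
  have hud : UniqueDiffOn ℝ K :=
    uniqueDiffOn_convex (convex_convexHull ℝ _) (interior_triangle_nonempty h)
  have hD : ContinuousOn (fun z => ‖fderivWithin ℝ v K z‖) K :=
    (hv.continuousOn_fderivWithin hud le_rfl).norm
  have hmem : ∀ y ∈ Icc (0:ℝ) (1/2), ∀ s ∈ Icc (0:ℝ) 1, refMap A B C (y, s * (1 - y)) ∈ K :=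
    fun y hy s hs => refMap_mem (mul_nonneg hs.1 (by linarith [hy.2])) hy.1
      (by nlinarith [hs.2, hy.2])
  have hdiam : ∀ p ∈ K, ∀ q ∈ K, ‖p - q‖ ≤ diam K := fun p hp q hq => by
    rw [← dist_eq_norm]; exact dist_le_diam_of_mem hKc.isBounded hp hq
  set G : ℝ → ℝ → ℝ := fun y s =>
    ‖fderivWithin ℝ v K (refMap A B C (clip (1/2) y, clip 1 s * (1 - clip (1/2) y)))‖ with hGdef
  have hP : Continuous fun z : ℝ × ℝ =>
      refMap A B C (clip (1/2) z.1, clip 1 z.2 * (1 - clip (1/2) z.1)) := by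
    refine (continuous_refMap A B C).comp ?_
    unfold clip; fun_prop
  have hPK : ∀ z : ℝ × ℝ,
      refMap A B C (clip (1/2) z.1, clip 1 z.2 * (1 - clip (1/2) z.1)) ∈ K :=
    fun z => hmem _ (clip_mem one_half_pos.le z.1) _ (clip_mem zero_le_one z.2)
  have hG : Continuous (Function.uncurry G) := hD.comp_continuous hP hPK
  have hGeq : ∀ y ∈ Icc (0:ℝ) (1/2), ∀ s ∈ Icc (0:ℝ) 1,
      G y s = ‖fderivWithin ℝ v K (refMap A B C (y, s * (1 - y)))‖ := fun y hy s hs => by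
    simp only [hGdef, clip_of_mem hy, clip_of_mem hs]
  have hG0 : ∀ y s, 0 ≤ G y s := fun _ _ => norm_nonneg _
  -- only `hG`, `hG0` and `hGeq` are needed of `G` from here on
  clear_value G
  have cy : ∀ s, Continuous fun y => G y s :=
    fun s => hG.comp (by fun_prop : Continuous fun y => (y, s))
  have cs : ∀ y, Continuous (G y) := fun y => hG.comp (by fun_prop : Continuous fun s => (y, s))
  have h0 : (0:ℝ) ∈ Icc (0:ℝ) (1/2) := by norm_num
  have hU0 : ∀ s : ℝ, refMap A B C (0, s * (1 - 0)) = A + s • (B - A) := fun s => by simp [refMap]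
  have main := rectangle_trace_poincare (U := fun y s => v (refMap A B C (y, s * (1 - y))))
    (G := G) (h := diam K) diam_nonneg hG hG0
    (hv.continuousOn.comp ((continuous_refMap A B C).comp (by fun_prop)).continuousOn
      fun s hs => hmem 0 h0 s hs)
    (by
      intro y hy s hs
      have hp : ∀ t : ℝ, (A + s • (B - A)) + t • (C - (A + s • (B - A))) =
          refMap A B C (t, s * (1 - t)) := fun t => by simp only [refMap]; module
      have hsub : ∀ t ∈ Icc 0 y, t ∈ Icc (0:ℝ) (1/2) := fun t ht => ⟨ht.1, ht.2.trans hy.2⟩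
      have := abs_sub_le_integral_on_segment hv (p := A + s • (B - A))
        (w := C - (A + s • (B - A))) (h := diam K) hy.1
        (fun t ht => by rw [hp]; exact hmem t (hsub t ht) s hs)
        (cy s) (hdiam _ hC _ (by rw [← hU0]; exact hmem 0 h0 s hs))
        (fun t ht => by rw [hp, hGeq t (hsub t ht) s hs])
      rw [hp, ← hU0] at this
      exact this)
    (by
      intro y hy s hs
      have hp : ∀ t : ℝ, (A + y • (C - A)) + t • ((1 - y) • (B - A)) =
          refMap A B C (y, t * (1 - y)) := fun t => by simp only [refMap]; module
      have hp0 : A + y • (C - A) = refMap A B C (y, 0 * (1 - y)) := by simp [refMap]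
      have hsub : ∀ t ∈ Icc 0 s, t ∈ Icc (0:ℝ) 1 := fun t ht => ⟨ht.1, ht.2.trans hs.2⟩
      have := abs_sub_le_integral_on_segment hv (p := A + y • (C - A))
        (w := (1 - y) • (B - A)) (h := diam K) hs.1
        (fun t ht => by rw [hp]; exact hmem y hy t (hsub t ht))
        (cs y) (by
          rw [norm_smul, Real.norm_of_nonneg (by linarith [hy.2])]
          have := hdiam _ hB _ hA
          nlinarith [norm_nonneg (B - A), hy.1])
        (fun t ht => by rw [hp, hGeq y hy t (hsub t ht)])
      rw [hp, hp0] at this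
      exact this)
  simp only [hU0] at main
  have hScompact : IsCompact (refMap A B C ⁻¹' K) :=
    (isCompact_Icc.prod isCompact_Icc).of_isClosed_subset
      (hKc.isClosed.preimage (continuous_refMap A B C)) (refMap_preimage_subset h)
  have hG2 : Continuous (Function.uncurry fun y s => G y s ^ 2) := hG.pow 2
  have trap := integral_trapezoid_le hScompact
    (fun x y hx hy hxy => refMap_mem hx hy hxy)
    (H := fun z => ‖fderivWithin ℝ v K (refMap A B C z)‖ ^ 2)
    ((hD.comp (continuous_refMap A B C).continuousOn fun z hz => hz).pow 2)
    (fun z => sq_nonneg _) (Q := fun y s => G y s ^ 2) hG2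
    (fun y hy s hs => by simp only [hGeq y hy s hs])
  have cov := setIntegral_refMap_mul_volume_le h (F := fun z => ‖fderivWithin ℝ v K z‖ ^ 2)
    (fun z => sq_nonneg _)
  calc _ ≤ (5 * diam K ^ 2 * (2 * ∫ z in refMap A B C ⁻¹' K,
        ‖fderivWithin ℝ v K (refMap A B C z)‖ ^ 2)) * volume.real K :=
        mul_le_mul_of_nonneg_right (main.trans
          (mul_le_mul_of_nonneg_left trap (by positivity))) measureReal_nonneg
    _ = 10 * diam K ^ 2 * ((∫ z in refMap A B C ⁻¹' K,
        ‖fderivWithin ℝ v K (refMap A B C z)‖ ^ 2) * volume.real K) := by ring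
    _ ≤ _ := mul_le_mul_of_nonneg_left cov (by positivity)

/-- Lemma 3.9, estimate (3.18): for any triangle `T` with edge `e = [A,B]` and
any `v ∈ C¹(T̄)`, `‖v − v̄ₑ‖_{L²(e)} ≤ C (|e|/|T|)^{1/2} h_T ‖∇v‖_{L²(T)}`. -/
theorem stmt12 :
    ∃ C : ℝ, 0 < C ∧ ∀ A B C' : E2, AffineIndependent ℝ ![A, B, C'] →
      ∀ v : E2 → ℝ, ContDiffOn ℝ 1 v (convexHull ℝ {A, B, C'}) →
        L2edge (fun z => v z - edgeMean v A B) A B ≤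
          C * Real.sqrt (dist A B / (volume (Tri A B C')).toReal) *
            Metric.diam (convexHull ℝ ({A, B, C'} : Set E2)) * gradL2 v (Tri A B C') := by
  refine ⟨4, by norm_num, fun A B C h v hv => ?_⟩
  have key := integral_edge_le h hv
  set K := convexHull ℝ ({A, B, C} : Set E2) with hK
  have hKc : IsCompact K := isCompact_triangle A B C
  have hAB : A ≠ B := fun hAB => by
    have := h.injective (a₁ := 0) (a₂ := 1) (by simpa using hAB)
    simp at this
  have hd : 0 < dist A B := dist_pos.2 hAB
  have hmean : edgeMean v A B = ∫ t in (0:ℝ)..1, v (A + t • (B - A)) := by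
    rw [edgeMean, setIntegral_segment, inv_mul_cancel_left₀ hd.ne']
  have hT : (volume (Tri A B C)).toReal = volume.real K := by
    have := congrArg (fun μ : Measure E2 => (μ univ).toReal) (restrict_interior_triangle A B C)
    simpa [Measure.real, Tri] using this
  have hTpos : 0 < volume.real K := by
    rw [← hT]
    exact ENNReal.toReal_pos (isOpen_interior.measure_pos _ (interior_triangle_nonempty h)).ne'
      ((measure_mono interior_subset).trans_lt hKc.measure_lt_top).ne
  have hgrad : ∫ z in K, ‖fderivWithin ℝ v K z‖ ^ 2 = ∫ z in Tri A B C, ‖fderiv ℝ v z‖ ^ 2 := by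
    rw [hK, ← restrict_interior_triangle, Tri]
    refine setIntegral_congr_fun isOpen_interior.measurableSet fun z hz => ?_
    rw [fderivWithin_of_mem_nhds (mem_interior_iff_mem_nhds.1 hz)]
  rw [hgrad] at key
  rw [L2edge, gradL2, hT, setIntegral_segment, hmean]
  set N := ∫ z in Tri A B C, ‖fderiv ℝ v z‖ ^ 2
  have hN : 0 ≤ N := integral_nonneg fun z => sq_nonneg _
  refine Real.sqrt_le_iff.2 ⟨by have := diam_nonneg (s := K); positivity, ?_⟩
  rw [mul_pow, mul_pow, mul_pow, Real.sq_sqrt (by positivity), Real.sq_sqrt hN]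
  rw [← le_div_iff₀ hTpos] at key
  refine (mul_le_mul_of_nonneg_left key hd.le).trans ?_
  have e : (4:ℝ) ^ 2 * (dist A B / volume.real K) * diam K ^ 2 * N =
    dist A B * (16 * diam K ^ 2 * N / volume.real K) := by ring
  rw [e]
  gcongr
  norm_num
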